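/- arXiv:2512.08258 — 5 statements merged into one kernel-verified Lean document; each statement's English description precedes it below -/
import Mathlib

section
/- Let b > 0 and let R denote the cumulative distribution function of U + e, where U is uniformly distributed on (0,1) and e has the Laplace density f_b(x) = (b/2)·exp(−b|x|) on ℝ, with U and e independent. Then R is given explicitly by: R(x) = (1/(2b))·e^{bx}·(1 − e^{−b}) for x < 0; R(x) = x + (1/(2b))·(e^{−bx} − e^{−b(1−x)}) for 0 ≤ x ≤ 1; and R(x) = 1 − (1/(2b))·e^{−b(x−1)}·(1 − e^{−b}) for x > 1. -/
open MeasureTheory ProbabilityTheory Real Set Filter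

noncomputable section

/-- The density of the Laplace distribution with location `0` and scale parameter `b`:
`f_b(x) = (b/2) exp(-b|x|)`. -/
def laplacePDF (b x : ℝ) : ℝ := b / 2 * Real.exp (-b * |x|)

/-- The Laplace(0, b) measure on `ℝ`. -/
def laplaceMeasure (b : ℝ) : Measure ℝ :=
  volume.withDensity fun x => ENNReal.ofReal (laplacePDF b x)

/-- The uniform distribution on the interval `(0,1)`. -/
def unifMeasure : Measure ℝ := volume.restrict (Set.Ioo 0 1)

/-!
If `ν` has cdf `G` and `F` is a primitive of `G`, then adding an independent uniform variable
turns the cdf into `x ↦ ∫ u in 0..1, G (x - u) = F x - F (x - 1)`. For the Laplace distribution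
`F t = max t 0 + exp (-b |t|) / (2 b)`, and the three cases of the formula are the three positions
of `0`, where the Laplace density has its kink, relative to `x - 1` and `x`.
-/

section Convolution

lemma conv_apply {M : Type*} [AddMonoid M] [MeasurableSpace M] [MeasurableAdd₂ M]
    (μ ν : Measure M) [SFinite ν] {s : Set M} (hs : MeasurableSet s) :
    (μ ∗ ν) s = ∫⁻ u, ν ((u + ·) ⁻¹' s) ∂μ := by
  rw [Measure.conv, Measure.map_apply measurable_add hs, Measure.prod_apply (measurable_add hs)]
  rfl

lemma cdf_conv (μ ν : Measure ℝ) [IsProbabilityMeasure μ] [IsProbabilityMeasure ν] (x : ℝ) :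
    cdf (μ ∗ ν) x = ∫ u, cdf ν (x - u) ∂μ := by
  have h_anti : Antitone fun u ↦ ν (Iic (x - u)) := fun u v huv ↦
    measure_mono (Iic_subset_Iic.2 (sub_le_sub_left huv x))
  simp only [cdf_eq_real, measureReal_def]
  rw [conv_apply μ ν measurableSet_Iic, integral_toReal h_anti.measurable.aemeasurable
    (Eventually.of_forall fun u ↦ measure_lt_top ν _)]
  simp only [preimage_const_add_Iic]

lemma measureReal_add_le_eq_cdf_conv {Ω : Type*} [MeasurableSpace Ω] {P : Measure Ω}
    [IsProbabilityMeasure P] {X Y : Ω → ℝ} (hX : AEMeasurable X P) (hY : AEMeasurable Y P)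
    (h_indep : IndepFun X Y P) (x : ℝ) :
    P.real {ω | X ω + Y ω ≤ x} = cdf (P.map X ∗ P.map Y) x := by
  have := Measure.isProbabilityMeasure_map (hX.add hY)
  rw [← h_indep.map_add_eq_map_conv_map₀ hX hY, cdf_eq_real,
    map_measureReal_apply_of_aemeasurable (hX.add hY) measurableSet_Iic]
  rfl

end Convolution

section Uniform

instance : IsProbabilityMeasure unifMeasure := ⟨by simp [unifMeasure]⟩

lemma cdf_unifMeasure_conv_eq_sub {ν : Measure ℝ} [IsProbabilityMeasure ν] {F : ℝ → ℝ} {s : Set ℝ}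
    (hs : s.Countable) (hF : Continuous F) (hF' : ∀ t ∉ s, HasDerivAt F (cdf ν t) t) (x : ℝ) :
    cdf (unifMeasure ∗ ν) x = F x - F (x - 1) :=
  calc cdf (unifMeasure ∗ ν) x
    _ = ∫ u in (0 : ℝ)..1, cdf ν (x - u) := by
      rw [cdf_conv, unifMeasure, ← integral_Ioc_eq_integral_Ioo,
        intervalIntegral.integral_of_le zero_le_one]
    _ = ∫ t in (x - 1)..x, cdf ν t := by
      rw [intervalIntegral.integral_comp_sub_left (cdf ν), sub_zero]
    _ = F x - F (x - 1) :=
      integral_eq_of_hasDerivAt_off_countable F _ hs hF.continuousOn (fun t ht ↦ hF' t ht.2)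
        (monotone_cdf ν).intervalIntegrable

end Uniform

section Symmetric

lemma isNegInvariant_withDensity {G : Type*} [MeasurableSpace G] [InvolutiveNeg G]
    [MeasurableNeg G] {μ : Measure G} [μ.IsNegInvariant] {f : G → ENNReal} (hf : f.Even) :
    (μ.withDensity f).IsNegInvariant := by
  refine ⟨Measure.ext fun s hs ↦ ?_⟩
  rw [Measure.neg_apply, withDensity_apply _ hs.neg, withDensity_apply _ hs,
    ← (Measure.measurePreserving_neg μ).setLIntegral_comp_preimage_emb
      (MeasurableEquiv.neg G).measurableEmbedding]
  simp only [hf _, neg_preimage, neg_neg]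

lemma measure_Ioi_neg_eq_measure_Iic {G : Type*} [AddCommGroup G] [PartialOrder G]
    [IsOrderedAddMonoid G] [MeasurableSpace G] [MeasurableNeg G] (μ : Measure G)
    [NullSingletonClass μ] [μ.IsNegInvariant] (t : G) : μ (Ioi (-t)) = μ (Iic t) := by
  rw [measure_congr Ioi_ae_eq_Ici, ← neg_Iic, Measure.measure_neg]

lemma cdf_neg_eq_one_sub (μ : Measure ℝ) [IsProbabilityMeasure μ] [NullSingletonClass μ]
    [μ.IsNegInvariant] (t : ℝ) : cdf μ (-t) = 1 - cdf μ t := by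
  rw [cdf_eq_real, cdf_eq_real, ← compl_Ioi, probReal_compl_eq_one_sub measurableSet_Ioi,
    measureReal_def, measure_Ioi_neg_eq_measure_Iic, ← measureReal_def]

end Symmetric

section Laplace

lemma hasDerivAt_exp_mul_div (c d t : ℝ) :
    HasDerivAt (fun s ↦ exp (c * s) / d) (c * exp (c * t) / d) t := by
  simpa [mul_comm] using (((hasDerivAt_id t).const_mul c).exp).div_const d

variable {b t : ℝ}

instance : NullSingletonClass (laplaceMeasure b) := nullSingletonClass_withDensity _

instance : (laplaceMeasure b).IsNegInvariant :=
  isNegInvariant_withDensity fun x ↦ by simp only [laplacePDF, abs_neg]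

lemma laplaceMeasure_Iic_of_nonpos (hb : 0 < b) (ht : t ≤ 0) :
    laplaceMeasure b (Iic t) = ENNReal.ofReal (exp (b * t) / 2) := by
  have h_density : EqOn (laplacePDF b) (fun x ↦ b / 2 * exp (b * x)) (Iic t) := fun x hx ↦ by
    simp only [laplacePDF, abs_of_nonpos (le_trans hx ht), neg_mul_neg]
  have h_int : IntegrableOn (laplacePDF b) (Iic t) :=
    IntegrableOn.congr_fun ((integrableOn_exp_mul_Iic hb t).const_mul _) h_density.symm
      measurableSet_Iic
  have h_nonneg (x : ℝ) : 0 ≤ laplacePDF b x := by unfold laplacePDF; positivity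
  rw [laplaceMeasure, withDensity_apply _ measurableSet_Iic,
    ← ofReal_integral_eq_lintegral_ofReal h_int (Eventually.of_forall h_nonneg),
    setIntegral_congr_fun measurableSet_Iic h_density, integral_const_mul,
    integral_exp_mul_Iic hb]
  congr 1
  field_simp

lemma isProbabilityMeasure_laplaceMeasure (hb : 0 < b) :
    IsProbabilityMeasure (laplaceMeasure b) := by
  refine ⟨?_⟩
  have h_Iic : laplaceMeasure b (Iic 0) = ENNReal.ofReal (1 / 2) := by
    rw [laplaceMeasure_Iic_of_nonpos hb le_rfl, mul_zero, exp_zero]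
  have h_Ioi : laplaceMeasure b (Ioi 0) = ENNReal.ofReal (1 / 2) := by
    rw [← h_Iic, ← measure_Ioi_neg_eq_measure_Iic, neg_zero]
  rw [← Iic_union_Ioi (a := (0 : ℝ)), measure_union (Iic_disjoint_Ioi le_rfl) measurableSet_Ioi,
    h_Iic, h_Ioi, ← ENNReal.ofReal_add (by norm_num) (by norm_num), add_halves,
    ENNReal.ofReal_one]

lemma cdf_laplaceMeasure_of_nonpos (hb : 0 < b) (ht : t ≤ 0) :
    cdf (laplaceMeasure b) t = exp (b * t) / 2 := by
  have := isProbabilityMeasure_laplaceMeasure hb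
  rw [cdf_eq_real, measureReal_def, laplaceMeasure_Iic_of_nonpos hb ht,
    ENNReal.toReal_ofReal (by positivity)]

lemma cdf_laplaceMeasure_of_nonneg (hb : 0 < b) (ht : 0 ≤ t) :
    cdf (laplaceMeasure b) t = 1 - exp (-b * t) / 2 := by
  have := isProbabilityMeasure_laplaceMeasure hb
  rw [← neg_neg t, cdf_neg_eq_one_sub, cdf_laplaceMeasure_of_nonpos hb (neg_nonpos.2 ht),
    neg_mul_neg]

/-- The primitive `t ↦ ∫ s in Iic t, cdf (laplaceMeasure b) s` of the Laplace cdf (for `0 < b`), in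
closed form; its increments over unit intervals are the values of the cdf of `U + e`. -/
def laplaceCDFPrimitive (b t : ℝ) : ℝ := max t 0 + exp (-b * |t|) / (2 * b)

lemma laplaceCDFPrimitive_of_nonpos (ht : t ≤ 0) :
    laplaceCDFPrimitive b t = exp (b * t) / (2 * b) := by
  rw [laplaceCDFPrimitive, max_eq_right ht, abs_of_nonpos ht, neg_mul_neg, zero_add]

lemma laplaceCDFPrimitive_of_nonneg (ht : 0 ≤ t) :
    laplaceCDFPrimitive b t = t + exp (-b * t) / (2 * b) := by
  rw [laplaceCDFPrimitive, max_eq_left ht, abs_of_nonneg ht]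

lemma continuous_laplaceCDFPrimitive (b : ℝ) : Continuous (laplaceCDFPrimitive b) := by
  unfold laplaceCDFPrimitive
  fun_prop

lemma hasDerivAt_laplaceCDFPrimitive (hb : 0 < b) (ht : t ≠ 0) :
    HasDerivAt (laplaceCDFPrimitive b) (cdf (laplaceMeasure b) t) t := by
  rcases ht.lt_or_gt with h_neg | h_pos
  · have h_eq : laplaceCDFPrimitive b =ᶠ[nhds t] fun s ↦ exp (b * s) / (2 * b) := by
      filter_upwards [Iio_mem_nhds h_neg] with s hs
        using laplaceCDFPrimitive_of_nonpos (le_of_lt hs)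
    rw [cdf_laplaceMeasure_of_nonpos hb h_neg.le]
    refine ((hasDerivAt_exp_mul_div _ _ t).congr_of_eventuallyEq h_eq).congr_deriv ?_
    field_simp
  · have h_eq : laplaceCDFPrimitive b =ᶠ[nhds t] fun s ↦ s + exp (-b * s) / (2 * b) := by
      filter_upwards [Ioi_mem_nhds h_pos] with s hs
        using laplaceCDFPrimitive_of_nonneg (le_of_lt hs)
    rw [cdf_laplaceMeasure_of_nonneg hb h_pos.le]
    refine (((hasDerivAt_id' t).add (hasDerivAt_exp_mul_div _ _ t)).congr_of_eventuallyEq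
      h_eq).congr_deriv ?_
    field_simp
    ring

lemma cdf_unifMeasure_conv_laplaceMeasure (hb : 0 < b) (x : ℝ) :
    cdf (unifMeasure ∗ laplaceMeasure b) x =
      laplaceCDFPrimitive b x - laplaceCDFPrimitive b (x - 1) :=
  have := isProbabilityMeasure_laplaceMeasure hb
  cdf_unifMeasure_conv_eq_sub (countable_singleton 0) (continuous_laplaceCDFPrimitive b)
    (fun _ ht ↦ hasDerivAt_laplaceCDFPrimitive hb ht) x

end Laplace

/-- explicit formula for the cdf `R` of `U + e` where `U ~ Uniform(0,1)` and
`e ~ Laplace(0,b)` are independent. -/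
theorem cdf_uniform_add_laplace
    {Ω : Type*} [MeasurableSpace Ω] (P : Measure Ω) [IsProbabilityMeasure P]
    (b : ℝ) (hb : 0 < b)
    (U e : Ω → ℝ) (hUm : Measurable U) (hem : Measurable e)
    (hU : Measure.map U P = unifMeasure)
    (he : Measure.map e P = laplaceMeasure b)
    (hind : IndepFun U e P)
    (R : ℝ → ℝ) (hR : ∀ x, R x = (P {ω | U ω + e ω ≤ x}).toReal) :
    (∀ x : ℝ, x < 0 →
        R x = 1 / (2 * b) * Real.exp (b * x) * (1 - Real.exp (-b))) ∧
    (∀ x : ℝ, 0 ≤ x → x ≤ 1 →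
        R x = x + 1 / (2 * b) * (Real.exp (-b * x) - Real.exp (-b * (1 - x)))) ∧
    (∀ x : ℝ, 1 < x →
        R x = 1 - 1 / (2 * b) * Real.exp (-b * (x - 1)) * (1 - Real.exp (-b))) := by
  have hR_primitive (x : ℝ) : R x = laplaceCDFPrimitive b x - laplaceCDFPrimitive b (x - 1) := by
    rw [hR, ← measureReal_def,
      measureReal_add_le_eq_cdf_conv hUm.aemeasurable hem.aemeasurable hind, hU, he,
      cdf_unifMeasure_conv_laplaceMeasure hb]
  refine ⟨fun x hx ↦ ?_, fun x h0 h1 ↦ ?_, fun x hx ↦ ?_⟩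
  · have h_exp : exp (b * (x - 1)) = exp (b * x) * exp (-b) := by rw [← exp_add]; ring_nf
    rw [hR_primitive, laplaceCDFPrimitive_of_nonpos hx.le,
      laplaceCDFPrimitive_of_nonpos (by linarith), h_exp]
    ring
  · rw [hR_primitive, laplaceCDFPrimitive_of_nonneg h0, laplaceCDFPrimitive_of_nonpos (by linarith)]
    ring_nf
  · have h_exp : exp (-b * x) = exp (-b * (x - 1)) * exp (-b) := by rw [← exp_add]; ring_nf
    rw [hR_primitive, laplaceCDFPrimitive_of_nonneg (by linarith),
      laplaceCDFPrimitive_of_nonneg (by linarith), h_exp]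
    ring

end
end

section
/- Let γ > 0, β > 0, b > 0. Let Z be a random variable with the generalized Pareto distribution GPD(γ,β), let e ~ Laplace(0,b) be independent of Z, let R denote the cumulative distribution function of U + e′ with U ~ Uniform(0,1) and e′ ~ Laplace(0,b) independent, and set H(x) = G_{γ,β}^{−1}(R(x)) where G_{γ,β}^{−1} is the inverse of the cdf of GPD(γ,β) on (0,1). Then the perturbed variable Z* = H(G_{γ,β}(Z) + e) again has the generalized Pareto distribution GPD(γ,β). -/
open MeasureTheory ProbabilityTheory Real Set Filter

noncomputable section

/-- The cdf of the generalized Pareto distribution GPD(γ, β). -/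
def gpdCDF (γ β y : ℝ) : ℝ := if y < 0 then 0 else 1 - (1 + γ * y / β) ^ (-(1 / γ))

/-- The inverse on `(0,1)` of the cdf of GPD(γ, β):
`G_{γ,β}^{-1}(p) = (β/γ)((1-p)^{-γ} - 1)`. -/
def gpdCDFInv (γ β p : ℝ) : ℝ := β / γ * ((1 - p) ^ (-γ) - 1)

/-! Every random variable with a continuous cdf `F` is turned into a uniform one by `F`. Hence
`F(Z)` and `U` have the same law, and so do `F(Z) + e` and `U + e'`. The latter law is atomless,
because the uniform distribution is, so its cdf `R` is continuous and `R(F(Z) + e)` is uniform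
again. Applying the quantile function of `F` then restores the law of `Z`. -/

section Convolution

variable {G : Type*} [AddGroup G] [MeasurableSpace G] [MeasurableAdd₂ G]
  [MeasurableSingletonClass G]

theorem nullSingletonClass_conv (μ ν : Measure G) [NullSingletonClass μ] [SFinite μ] [SFinite ν] :
    NullSingletonClass (μ ∗ ν) where
  measure_singleton x := by
    have hadd : Measurable fun p : G × G ↦ p.1 + p.2 := measurable_add
    have hslice (z : G) :
        (fun y ↦ (y, z)) ⁻¹' ((fun p : G × G ↦ p.1 + p.2) ⁻¹' {x}) = {x - z} := by
      ext y
      simp only [mem_preimage, mem_singleton_iff, eq_sub_iff_add_eq]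
    rw [Measure.conv, Measure.map_apply hadd (measurableSet_singleton x),
      Measure.prod_apply_symm (hadd (measurableSet_singleton x))]
    simp only [hslice, measure_singleton, lintegral_zero]

end Convolution

section CDF

theorem continuous_cdf (μ : Measure ℝ) [IsProbabilityMeasure μ] [NullSingletonClass μ] :
    Continuous (cdf μ) := by
  refine continuous_iff_continuousAt.2 fun x ↦ ?_
  have hjump : ENNReal.ofReal (cdf μ x - Function.leftLim (cdf μ) x) = 0 := by
    rw [← StieltjesFunction.measure_singleton, measure_cdf, measure_singleton]
  rw [(monotone_cdf μ).continuousAt_iff_leftLim_eq_rightLim, StieltjesFunction.rightLim_eq]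
  exact le_antisymm ((monotone_cdf μ).leftLim_le le_rfl)
    (sub_nonpos.1 (ENNReal.ofReal_eq_zero.1 hjump))

variable {μ : Measure ℝ}

theorem exists_cdf_preimage_Iic_eq (hμ : Continuous (cdf μ)) {u : ℝ} (hu : u ∈ Ioo 0 1) :
    ∃ s, cdf μ s = u ∧ cdf μ ⁻¹' Iic u = Iic s := by
  obtain ⟨x, hx⟩ : ∃ x, cdf μ x = u := mem_range_of_exists_le_of_exists_ge hμ
    ((tendsto_cdf_atBot μ).eventually_le_const hu.1).exists
    ((tendsto_cdf_atTop μ).eventually_const_le hu.2).exists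
  have hbdd : BddAbove (cdf μ ⁻¹' Iic u) := by
    obtain ⟨t, ht⟩ := ((tendsto_cdf_atTop μ).eventually_const_lt hu.2).exists
    exact ⟨t, fun y hy ↦ ((monotone_cdf μ).reflect_lt (lt_of_le_of_lt hy ht)).le⟩
  obtain ⟨s, hs_le, hs_ub⟩ : ∃ s, IsGreatest (cdf μ ⁻¹' Iic u) s :=
    ⟨_, (isClosed_Iic.preimage hμ).csSup_mem ⟨x, hx.le⟩ hbdd, fun _ hy ↦ le_csSup hbdd hy⟩
  refine ⟨s, hs_le.antisymm ?_, Subset.antisymm hs_ub fun _ hy ↦ ?_⟩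
  · exact hx.ge.trans (monotone_cdf μ (hs_ub hx.le))
  · exact (monotone_cdf μ hy).trans hs_le

theorem cdf_eq_max_min_of_cdf_eq_self (h : ∀ u ∈ Ioo (0 : ℝ) 1, cdf μ u = u) (x : ℝ) :
    cdf μ x = max 0 (min x 1) := by
  rcases le_or_gt x 0 with hx₀ | hx₀
  · rw [max_eq_left (min_le_of_left_le hx₀)]
    refine le_antisymm (le_of_forall_gt_imp_ge_of_dense fun a ha ↦ ?_) (cdf_nonneg μ x)
    have hmem : min a (1 / 2) ∈ Ioo (0 : ℝ) 1 :=
      ⟨lt_min ha (by norm_num), min_lt_of_right_lt (by norm_num)⟩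
    calc cdf μ x ≤ cdf μ (min a (1 / 2)) := monotone_cdf μ (hx₀.trans hmem.1.le)
      _ = min a (1 / 2) := h _ hmem
      _ ≤ a := min_le_left _ _
  rcases le_or_gt 1 x with hx₁ | hx₁
  · rw [min_eq_right hx₁, max_eq_right zero_le_one]
    refine le_antisymm (cdf_le_one μ x) (le_of_forall_lt_imp_le_of_dense fun a ha ↦ ?_)
    have hmem : max a (1 / 2) ∈ Ioo (0 : ℝ) 1 :=
      ⟨lt_max_of_lt_right (by norm_num), max_lt ha (by norm_num)⟩
    calc a ≤ max a (1 / 2) := le_max_left _ _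
      _ = cdf μ (max a (1 / 2)) := (h _ hmem).symm
      _ ≤ cdf μ x := monotone_cdf μ (hmem.2.le.trans hx₁)
  · rw [h x ⟨hx₀, hx₁⟩, min_eq_left hx₁.le, max_eq_right hx₀.le]

end CDF

section Uniform

instance : NullSingletonClass unifMeasure := by
  unfold unifMeasure
  infer_instance

theorem measureReal_unifMeasure_Iic {u : ℝ} (hu : u ∈ Icc 0 1) : unifMeasure.real (Iic u) = u := by
  have hinter : Iic u ∩ Ioc 0 1 = Ioc 0 u := by
    rw [inter_comm, Ioc_inter_Iic, min_eq_right hu.2]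
  rw [unifMeasure, measureReal_def, restrict_Ioo_eq_restrict_Ioc,
    Measure.restrict_apply measurableSet_Iic, hinter, Real.volume_Ioc, sub_zero,
    ENNReal.toReal_ofReal hu.1]

theorem eq_unifMeasure_of_cdf_eq_self {μ : Measure ℝ} [IsProbabilityMeasure μ]
    (h : ∀ u ∈ Ioo (0 : ℝ) 1, cdf μ u = u) : μ = unifMeasure := by
  have hunif : ∀ u ∈ Ioo (0 : ℝ) 1, cdf unifMeasure u = u := fun u hu ↦ by
    rw [cdf_eq_real, measureReal_unifMeasure_Iic (Ioo_subset_Icc_self hu)]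
  refine Measure.eq_of_cdf _ _ (StieltjesFunction.ext fun x ↦ ?_)
  rw [cdf_eq_max_min_of_cdf_eq_self h, cdf_eq_max_min_of_cdf_eq_self hunif]

theorem hasLaw_cdf_unifMeasure {μ : Measure ℝ} [IsProbabilityMeasure μ]
    (hμ : Continuous (cdf μ)) : HasLaw (cdf μ) unifMeasure μ where
  aemeasurable := hμ.aemeasurable
  map_eq := by
    have := Measure.isProbabilityMeasure_map (μ := μ) hμ.aemeasurable
    refine eq_unifMeasure_of_cdf_eq_self fun u hu ↦ ?_
    obtain ⟨s, hs, hpre⟩ := exists_cdf_preimage_Iic_eq hμ hu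
    rw [cdf_eq_real, map_measureReal_apply hμ.measurable measurableSet_Iic, hpre, ← cdf_eq_real, hs]

variable {Ω : Type*} [MeasurableSpace Ω] {P : Measure Ω}

theorem hasLaw_unifMeasure_of_continuous_cdf [IsProbabilityMeasure P] {Z : Ω → ℝ} {F : ℝ → ℝ}
    (hZm : AEMeasurable Z P) (hF : Continuous F) (hZ : ∀ y, P.real {ω | Z ω ≤ y} = F y) :
    HasLaw (fun ω ↦ F (Z ω)) unifMeasure P := by
  have := Measure.isProbabilityMeasure_map hZm
  have hcdf : cdf (P.map Z) = F := funext fun y ↦ by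
    rw [cdf_eq_real, map_measureReal_apply_of_aemeasurable hZm measurableSet_Iic]
    exact hZ y
  have hunif := hasLaw_cdf_unifMeasure (μ := P.map Z) (hcdf ▸ hF)
  rw [hcdf] at hunif
  exact hunif.fun_comp ⟨hZm, rfl⟩

theorem measureReal_quantile_le {V : Ω → ℝ} {F q : ℝ → ℝ} (hV : HasLaw V unifMeasure P)
    (hq : ∀ p ∈ Ioo (0 : ℝ) 1, ∀ y, q p ≤ y ↔ p ≤ F y) {y : ℝ} (hy : F y ∈ Icc 0 1) :
    P.real {ω | q (V ω) ≤ y} = F y := by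
  have hmem : ∀ᵐ ω ∂P, V ω ∈ Ioo (0 : ℝ) 1 :=
    (hV.ae_iff measurableSet_Ioo.mem).2 (ae_restrict_mem measurableSet_Ioo)
  calc P.real {ω | q (V ω) ≤ y} = P.real {ω | V ω ≤ F y} :=
        measureReal_congr <| by
          filter_upwards [hmem] with ω hω using propext (hq _ hω y)
    _ = unifMeasure.real (Iic (F y)) := hV.measureReal_eq measurableSet_Iic
    _ = F y := measureReal_unifMeasure_Iic hy

end Uniform

section GeneralizedPareto

variable {γ β : ℝ}

theorem gpdCDF_eq_max (γ β y : ℝ) :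
    gpdCDF γ β y = 1 - (1 + γ * max y 0 / β) ^ (-γ)⁻¹ := by
  unfold gpdCDF
  split_ifs with hy
  · simp [max_eq_right hy.le]
  · rw [max_eq_left (not_lt.1 hy), one_div, inv_neg]

theorem one_add_mul_max_div_pos (hγ : 0 < γ) (hβ : 0 < β) (y : ℝ) :
    0 < 1 + γ * max y 0 / β := by
  positivity

theorem continuous_gpdCDF (hγ : 0 < γ) (hβ : 0 < β) : Continuous (gpdCDF γ β) := by
  simp_rw [funext (gpdCDF_eq_max γ β)]
  refine continuous_const.sub (Continuous.rpow_const (by fun_prop) fun y ↦ ?_)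
  exact .inl (one_add_mul_max_div_pos hγ hβ y).ne'

theorem gpdCDFInv_pos (hγ : 0 < γ) (hβ : 0 < β) {p : ℝ} (hp : p ∈ Ioo 0 1) :
    0 < gpdCDFInv γ β p := by
  have hone_lt : 1 < (1 - p) ^ (-γ) := Real.one_lt_rpow_of_pos_of_lt_one_of_neg
    (sub_pos.2 hp.2) (sub_lt_self 1 hp.1) (neg_neg_of_pos hγ)
  exact mul_pos (div_pos hβ hγ) (sub_pos.2 hone_lt)

theorem gpdCDFInv_le_iff (hγ : 0 < γ) (hβ : 0 < β) {p : ℝ} (hp : p ∈ Ioo 0 1) (y : ℝ) :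
    gpdCDFInv γ β p ≤ y ↔ p ≤ gpdCDF γ β y :=
  calc gpdCDFInv γ β p ≤ y
    _ ↔ gpdCDFInv γ β p ≤ max y 0 := by
        rw [le_max_iff, or_iff_left (gpdCDFInv_pos hγ hβ hp).not_ge]
    _ ↔ (1 - p) ^ (-γ) ≤ 1 + γ * max y 0 / β := by
        rw [gpdCDFInv, ← le_div_iff₀' (by positivity), sub_le_iff_le_add',
          div_div_eq_mul_div, mul_comm (max y 0)]
    _ ↔ (1 + γ * max y 0 / β) ^ (-γ)⁻¹ ≤ 1 - p :=
        (Real.rpow_inv_le_iff_of_neg (one_add_mul_max_div_pos hγ hβ y) (sub_pos.2 hp.2)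
          (neg_neg_of_pos hγ)).symm
    _ ↔ p ≤ gpdCDF γ β y := by rw [gpdCDF_eq_max, le_sub_comm]

end GeneralizedPareto

section Perturbation

variable {Ω Ω' : Type*} [MeasurableSpace Ω] [MeasurableSpace Ω'] {P : Measure Ω}
  {P' : Measure Ω'} {e : Ω → ℝ} {e' U : Ω' → ℝ}

theorem hasLaw_cdf_add_unifMeasure {V : Ω → ℝ} {R : ℝ → ℝ}
    (hV : HasLaw V unifMeasure P) (hVe : IndepFun V e P) (hee' : IdentDistrib e e' P P')
    (hU : HasLaw U unifMeasure P') (hUe' : IndepFun U e' P')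
    (hR : ∀ x, R x = P'.real {ω | U ω + e' ω ≤ x}) :
    HasLaw (fun ω ↦ R (V ω + e ω)) unifMeasure P := by
  have := hV.isProbabilityMeasure
  have := Measure.isProbabilityMeasure_map hee'.aemeasurable_fst
  have he : HasLaw e (P.map e) P := ⟨hee'.aemeasurable_fst, rfl⟩
  have hVe_law := hVe.hasLaw_fun_add hV he
  have hUe'_law := hUe'.hasLaw_fun_add hU (hee'.hasLaw he)
  have := nullSingletonClass_conv unifMeasure (P.map e)
  have hcdf : R = cdf (unifMeasure ∗ P.map e) := funext fun x ↦ by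
    rw [hR, cdf_eq_real]
    exact hUe'_law.measureReal_eq measurableSet_Iic
  rw [hcdf]
  exact (hasLaw_cdf_unifMeasure (continuous_cdf _)).fun_comp hVe_law

theorem perturbed_variable_follows_gpd_general [IsProbabilityMeasure P] {Z : Ω → ℝ}
    {F q R : ℝ → ℝ} (hF : Continuous F) (hq : ∀ p ∈ Ioo (0 : ℝ) 1, ∀ y, q p ≤ y ↔ p ≤ F y)
    (hZm : AEMeasurable Z P) (hZ : ∀ y, P.real {ω | Z ω ≤ y} = F y) (hZe : IndepFun Z e P)
    (hee' : IdentDistrib e e' P P') (hU : HasLaw U unifMeasure P') (hUe' : IndepFun U e' P')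
    (hR : ∀ x, R x = P'.real {ω | U ω + e' ω ≤ x}) (y : ℝ) :
    P.real {ω | q (R (F (Z ω) + e ω)) ≤ y} = F y := by
  have hFZ : HasLaw (fun ω ↦ F (Z ω)) unifMeasure P :=
    hasLaw_unifMeasure_of_continuous_cdf hZm hF hZ
  have hFZe : IndepFun (fun ω ↦ F (Z ω)) e P := hZe.comp hF.measurable measurable_id
  have hFy : F y ∈ Icc (0 : ℝ) 1 := hZ y ▸ ⟨measureReal_nonneg, measureReal_le_one⟩
  exact measureReal_quantile_le (hasLaw_cdf_add_unifMeasure hFZ hFZe hee' hU hUe' hR) hq hFy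

end Perturbation

/-- the perturbed variable `Z* = H(G_{γ,β}(Z) + e)`, where
`H = G_{γ,β}^{-1} ∘ R` and `R` is the cdf of an independent Uniform(0,1) plus
Laplace(0,b) sum, again follows GPD(γ, β). -/
theorem perturbed_variable_follows_gpd
    {Ω : Type*} [MeasurableSpace Ω] (P : Measure Ω) [IsProbabilityMeasure P]
    {Ω' : Type*} [MeasurableSpace Ω'] (P' : Measure Ω') [IsProbabilityMeasure P']
    (γ β b : ℝ) (hγ : 0 < γ) (hβ : 0 < β) (hb : 0 < b)
    (Z e : Ω → ℝ) (hZm : Measurable Z) (hem : Measurable e)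
    (hZ : ∀ y : ℝ, (P {ω | Z ω ≤ y}).toReal = gpdCDF γ β y)
    (he : Measure.map e P = laplaceMeasure b)
    (hZe : IndepFun Z e P)
    (U e' : Ω' → ℝ) (hUm : Measurable U) (he'm : Measurable e')
    (hU : Measure.map U P' = unifMeasure)
    (he' : Measure.map e' P' = laplaceMeasure b)
    (hUe' : IndepFun U e' P')
    (R : ℝ → ℝ) (hR : ∀ x, R x = (P' {ω | U ω + e' ω ≤ x}).toReal)
    (H : ℝ → ℝ) (hH : ∀ x, H x = gpdCDFInv γ β (R x))
    (Zstar : Ω → ℝ) (hZstar : ∀ ω, Zstar ω = H (gpdCDF γ β (Z ω) + e ω)) :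
    ∀ y : ℝ, (P {ω | Zstar ω ≤ y}).toReal = gpdCDF γ β y := by
  simp only [hZstar, hH]
  exact perturbed_variable_follows_gpd_general (continuous_gpdCDF hγ hβ)
    (fun _ hp ↦ gpdCDFInv_le_iff hγ hβ hp) hZm.aemeasurable hZ hZe
    ⟨hem.aemeasurable, he'm.aemeasurable, he.trans he'.symm⟩ ⟨hUm.aemeasurable, hU⟩ hUe' hR

end
end

section
/- Let b > 0 and k ≥ 1. For an input vector v = (v_1,…,v_k) ∈ [0,1]^k, let M(v) = (v_1 + e_1, …, v_k + e_k), where e_1,…,e_k are independent Laplace(0,b) random variables. Then for any two inputs v, v′ ∈ [0,1]^k that differ in exactly one coordinate and any Borel set B ⊆ ℝ^k, P(M(v) ∈ B) ≤ e^{b} · P(M(v′) ∈ B). That is, the Laplace noise-addition mechanism on [0,1]^k satisfies b-differential privacy. -/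
open MeasureTheory ProbabilityTheory Real Set

noncomputable section

/-!
By the triangle inequality the densities of two translates of Laplace(0, b), by `a` and by `a'`,
differ at most by the factor `exp (b * |a - a'|)`. Independence makes the output law a product of
such translates, and the factors multiply to `exp (b * ∑ j, |v j - v' j|)`. Two points of the unit
cube that agree off one coordinate are at `ℓ¹`-distance at most `1`.
-/

theorem pi_le_prod_smul_pi {ι : Type*} [Fintype ι] {α : ι → Type*}
    [∀ i, MeasurableSpace (α i)] {μ ν : ∀ i, Measure (α i)} {c : ι → ENNReal}
    (hc : ∀ i, c i ≠ ⊤) (h : ∀ i, μ i ≤ c i • ν i) :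
    Measure.pi μ ≤ (∏ i, c i) • Measure.pi ν := by
  have outer_le : OuterMeasure.pi (fun i => (μ i).toOuterMeasure) ≤
      (∏ i, c i) • OuterMeasure.pi fun i => (ν i).toOuterMeasure := by
    rw [OuterMeasure.pi, OuterMeasure.pi,
      OuterMeasure.smul_boundedBy (ENNReal.prod_ne_top fun i _ => hc i), OuterMeasure.le_boundedBy]
    intro s
    calc OuterMeasure.boundedBy (piPremeasure fun i => (μ i).toOuterMeasure) s
        ≤ ∏ i, μ i (Function.eval i '' s) := OuterMeasure.boundedBy_le s
      _ ≤ ∏ i, c i * ν i (Function.eval i '' s) := Finset.prod_le_prod' fun i _ => h i _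
      _ = (∏ i, c i) * ∏ i, ν i (Function.eval i '' s) := Finset.prod_mul_distrib
  refine Measure.le_iff.2 fun s hs => ?_
  rw [Measure.smul_apply, Measure.pi, Measure.pi, toMeasure_apply _ _ hs, toMeasure_apply _ _ hs]
  exact outer_le s

theorem map_const_add_withDensity {G : Type*} [AddGroup G] [MeasurableSpace G] [MeasurableAdd G]
    (μ : Measure G) [μ.IsAddLeftInvariant] (f : G → ENNReal) (a : G) :
    (μ.withDensity f).map (a + ·) = μ.withDensity fun x => f (-a + x) := by
  ext s hs
  rw [Measure.map_apply (measurable_const_add a) hs,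
    withDensity_apply _ (measurable_const_add a hs), withDensity_apply _ hs]
  simpa only [neg_add_cancel_left] using
    (measurePreserving_add_left μ a).setLIntegral_comp_preimage_emb
      (measurableEmbedding_addLeft a) (fun x => f (-a + x)) s

theorem map_fun_comp_eq_pi_map {ι Ω : Type*} [Fintype ι] [MeasurableSpace Ω] {P : Measure Ω}
    {β γ : ι → Type*} [∀ i, MeasurableSpace (β i)] [∀ i, MeasurableSpace (γ i)]
    {X : ∀ i, Ω → β i} (hX : ∀ i, AEMeasurable (X i) P) (hind : iIndepFun X P)
    {g : ∀ i, β i → γ i} (hg : ∀ i, Measurable (g i)) :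
    P.map (fun ω i => g i (X i ω)) = Measure.pi fun i => (P.map (X i)).map (g i) := by
  have map_map (i : ι) : (P.map (X i)).map (g i) = P.map (g i ∘ X i) :=
    AEMeasurable.map_map_of_aemeasurable (hg i).aemeasurable (hX i)
  simp only [map_map]
  exact (hind.comp g hg).map_fun_eq_pi_map fun i => (hg i).comp_aemeasurable (hX i)

theorem laplacePDF_le_exp_mul {b : ℝ} (hb : 0 ≤ b) (x y : ℝ) :
    laplacePDF b x ≤ exp (b * |y - x|) * laplacePDF b y := by
  have abs_le : |y| ≤ |y - x| + |x| := by simpa only [sub_add_cancel] using abs_add_le (y - x) x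
  calc b / 2 * exp (-b * |x|)
      ≤ b / 2 * exp (b * |y - x| + -b * |y|) := by
        gcongr
        linarith [mul_le_mul_of_nonneg_left abs_le hb]
    _ = exp (b * |y - x|) * (b / 2 * exp (-b * |y|)) := by rw [exp_add, mul_left_comm]

theorem map_const_add_laplaceMeasure_le {b : ℝ} (hb : 0 ≤ b) (a a' : ℝ) :
    (laplaceMeasure b).map (a + ·) ≤
      ENNReal.ofReal (exp (b * |a - a'|)) • (laplaceMeasure b).map (a' + ·) := by
  simp only [laplaceMeasure, map_const_add_withDensity]
  rw [← withDensity_smul' _ _ ENNReal.ofReal_ne_top]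
  refine withDensity_mono (ae_of_all _ fun x => ?_)
  rw [Pi.smul_apply, smul_eq_mul, ← ENNReal.ofReal_mul (exp_pos _).le]
  have density_le := laplacePDF_le_exp_mul hb (-a + x) (-a' + x)
  rw [show -a' + x - (-a + x) = a - a' by ring] at density_le
  exact ENNReal.ofReal_le_ofReal density_le

theorem sum_abs_sub_le_one_of_eq_off {ι : Type*} [Fintype ι] {v v' : ι → ℝ} {i : ι}
    (heq : ∀ j, j ≠ i → v j = v' j) (hv : v i ∈ Icc 0 1) (hv' : v' i ∈ Icc 0 1) :
    ∑ j, |v j - v' j| ≤ 1 := by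
  rw [Fintype.sum_eq_single i fun j hj => by rw [heq j hj, sub_self, abs_zero]]
  exact Real.dist_le_of_mem_Icc_01 hv hv'

theorem laplace_mechanism_differentially_private_general
    {Ω ι : Type*} [MeasurableSpace Ω] [Fintype ι] {P : Measure Ω} {b : ℝ} (hb : 0 ≤ b)
    {e : ι → Ω → ℝ} (hem : ∀ j, AEMeasurable (e j) P) (hind : iIndepFun e P)
    (hlaw : ∀ j, P.map (e j) = laplaceMeasure b) {v v' : ι → ℝ} {Δ : ℝ}
    (hΔ : ∑ j, |v j - v' j| ≤ Δ) {B : Set (ι → ℝ)} (hB : MeasurableSet B) :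
    P {ω | (fun j => v j + e j ω) ∈ B} ≤
      ENNReal.ofReal (exp (b * Δ)) * P {ω | (fun j => v' j + e j ω) ∈ B} := by
  have law_apply (w : ι → ℝ) : P {ω | (fun j => w j + e j ω) ∈ B} =
      Measure.pi (fun j => (laplaceMeasure b).map (w j + ·)) B := by
    have output_law : P.map (fun ω j => w j + e j ω) =
        Measure.pi fun j => (laplaceMeasure b).map (w j + ·) := by
      simpa only [hlaw] using map_fun_comp_eq_pi_map hem hind fun j => measurable_const_add (w j)
    rw [← output_law, Measure.map_apply_of_aemeasurable
      (aemeasurable_pi_lambda _ fun j => (hem j).const_add (w j)) hB]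
    rfl
  have prod_exp_le : ∏ j, ENNReal.ofReal (exp (b * |v j - v' j|)) ≤
      ENNReal.ofReal (exp (b * Δ)) := by
    rw [← ENNReal.ofReal_prod_of_nonneg fun j _ => (exp_pos _).le, ← exp_sum, ← Finset.mul_sum]
    gcongr
  rw [law_apply v, law_apply v']
  have pi_le := pi_le_prod_smul_pi (fun _ => ENNReal.ofReal_ne_top) fun j =>
    map_const_add_laplaceMeasure_le hb (v j) (v' j)
  exact (pi_le B).trans (mul_le_mul_left prod_exp_le _)

/-- the Laplace noise-addition mechanism `M(v) = (v_1 + e_1, …, v_k + e_k)` on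
`[0,1]^k`, with `e_1, …, e_k` i.i.d. Laplace(0,b), satisfies `b`-differential privacy: for
inputs `v, v'` in `[0,1]^k` differing in exactly one coordinate and any Borel set `B`,
`P(M(v) ∈ B) ≤ e^b P(M(v') ∈ B)`. -/
theorem laplace_mechanism_differentially_private
    {Ω : Type*} [MeasurableSpace Ω] (P : Measure Ω) [IsProbabilityMeasure P]
    (b : ℝ) (hb : 0 < b) (k : ℕ) (hk : 1 ≤ k)
    (e : Fin k → Ω → ℝ) (hem : ∀ j, Measurable (e j))
    (hind : iIndepFun e P)
    (hlaw : ∀ j, Measure.map (e j) P = laplaceMeasure b)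
    (v v' : Fin k → ℝ)
    (hv : ∀ j, v j ∈ Set.Icc (0:ℝ) 1) (hv' : ∀ j, v' j ∈ Set.Icc (0:ℝ) 1)
    (hdiff : ∃ i₀ : Fin k, (∀ j, j ≠ i₀ → v j = v' j))
    (B : Set (Fin k → ℝ)) (hB : MeasurableSet B) :
    P {ω | (fun j => v j + e j ω) ∈ B} ≤
      ENNReal.ofReal (Real.exp b) * P {ω | (fun j => v' j + e j ω) ∈ B} := by
  obtain ⟨i₀, heq⟩ := hdiff
  simpa only [mul_one] using laplace_mechanism_differentially_private_general hb.le
    (fun j => (hem j).aemeasurable) hind hlaw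
    (sum_abs_sub_le_one_of_eq_off heq (hv i₀) (hv' i₀)) hB

end
end

section
/- (Theorem 4) Let b > 0 and k ≥ 1. Let Θ̂ be a random parameter vector Θ̂ = (γ̂, β̂) taking values in (0,∞)² (an estimator computed from a sample independent of the data being privatized and of the noise). Define the mechanism that maps an input z = (z_1,…,z_k) ∈ (0,∞)^k to Z* = (H_{Θ̂}(G_{Θ̂}(z_1) + e_1), …, H_{Θ̂}(G_{Θ̂}(z_k) + e_k)), where e_1,…,e_k are independent Laplace(0,b) random variables independent of Θ̂, G_{Θ̂} is the cdf of GPD(γ̂, β̂), H_{Θ̂} = G_{Θ̂}^{−1} ∘ R, and R is the cdf of U + e with U ~ Uniform(0,1) independent of e ~ Laplace(0,b). Then for any two inputs z, z′ ∈ (0,∞)^k differing in exactly one coordinate and any Borel set B ⊆ ℝ^k, P(Z*(z) ∈ B) ≤ e^{b} · P(Z*(z′) ∈ B); that is, the mechanism with estimated parameter is b-differentially private. -/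
/-!
The Laplace density satisfies `f_b(x) ≤ e^{b|x - y|} f_b(y)`, so shifting Laplace noise by `c`
instead of `c'` changes its law by a factor of at most `e^{b|c - c'|}`, and a vector of independent
noises by at most `e^{b‖c - c'‖₁}`. Since a cdf takes values in `[0, 1]`, the vectors
`(G_θ(z_j))_j` and `(G_θ(z'_j))_j` are at `ℓ¹`-distance at most the number of coordinates where `z`
and `z'` differ. The bound is uniform in `θ`, so it survives averaging over the independent
estimator, and the map `H_θ` is post-processing, which only has to be measurable.
-/

open MeasureTheory ProbabilityTheory Real Set

noncomputable section

/-- `H_θ = G_θ^{-1} ∘ R` for a parameter `θ = (γ, β)` and a function `R`. -/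
def Hfun (θ : ℝ × ℝ) (R : ℝ → ℝ) (x : ℝ) : ℝ := gpdCDFInv θ.1 θ.2 (R x)

section MeasureComparison

open scoped ENNReal NNReal

theorem map_add_left_withDensity {G : Type*} [MeasurableSpace G] [AddGroup G] [MeasurableAdd G]
    (μ : Measure G) [μ.IsAddLeftInvariant] (f : G → ℝ≥0∞) (c : G) :
    (μ.withDensity f).map (c + ·) = μ.withDensity fun x => f (-c + x) := by
  ext s hs
  have hpre : MeasurableSet ((c + ·) ⁻¹' s) := measurable_const_add c hs
  rw [Measure.map_apply (measurable_const_add c) hs, withDensity_apply _ hpre,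
    withDensity_apply _ hs, ← (measurePreserving_add_left μ c).setLIntegral_comp_preimage_emb
      (measurableEmbedding_addLeft c) (fun x => f (-c + x))]
  simp only [neg_add_cancel_left]

variable {ι : Type*} [Fintype ι] {α : ι → Type*} [∀ i, MeasurableSpace (α i)]

theorem measure_pi_mono {μ ν : ∀ i, Measure (α i)} (h : ∀ i, μ i ≤ ν i) :
    Measure.pi μ ≤ Measure.pi ν := by
  refine Measure.le_iff.2 fun s hs => ?_
  rw [Measure.pi, Measure.pi, toMeasure_apply _ _ hs, toMeasure_apply _ _ hs]
  exact OuterMeasure.le_pi.2 (fun t _ => (OuterMeasure.pi_pi_le _ t).trans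
    (Finset.prod_le_prod' fun i _ => h i (t i))) s

theorem measure_pi_smul (c : ι → ℝ≥0) (μ : ∀ i, Measure (α i)) [∀ i, SigmaFinite (μ i)] :
    Measure.pi (fun i => c i • μ i) = (∏ i, c i) • Measure.pi μ := by
  refine Measure.pi_eq fun s _ => ?_
  simp only [Measure.smul_apply, Measure.pi_pi, ENNReal.smul_def, smul_eq_mul,
    Finset.prod_mul_distrib, ENNReal.ofNNReal_finsetProd]

end MeasureComparison

theorem hasLaw_pi_of_iIndepFun {Ω ι : Type*} [MeasurableSpace Ω] {P : Measure Ω} [Fintype ι]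
    {α : ι → Type*} [∀ i, MeasurableSpace (α i)] {X : ∀ i, Ω → α i} {μ : ∀ i, Measure (α i)}
    (hX : ∀ i, HasLaw (X i) (μ i) P) (hind : iIndepFun X P) :
    HasLaw (fun ω i => X i ω) (Measure.pi μ) P where
  aemeasurable := aemeasurable_pi_lambda _ fun i => (hX i).aemeasurable
  map_eq := by
    rw [hind.map_fun_eq_pi_map fun i => (hX i).aemeasurable]
    simp only [(hX _).map_eq]

theorem measure_prodMk_mem_le_of_indepFun {Ω E T : Type*} [MeasurableSpace Ω] {P : Measure Ω}
    [IsFiniteMeasure P] [MeasurableSpace E] [MeasurableSpace T] {X : Ω → E} {Y : Ω → T}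
    {μ : Measure E} (hX : HasLaw X μ P) (hY : AEMeasurable Y P) (hXY : IndepFun X Y P)
    {S S' : Set (E × T)} (hS : MeasurableSet S) (hS' : MeasurableSet S') (r : ENNReal)
    (h : ∀ᵐ ω ∂P, μ {x | (x, Y ω) ∈ S} ≤ r * μ {x | (x, Y ω) ∈ S'}) :
    P {ω | (X ω, Y ω) ∈ S} ≤ r * P {ω | (X ω, Y ω) ∈ S'} := by
  have : IsFiniteMeasure μ := hX.isFiniteMeasure_iff.1 inferInstance
  have hslice : ∀ {A : Set (E × T)}, MeasurableSet A → Measurable fun t => μ {x | (x, t) ∈ A} :=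
    fun hA => measurable_measure_prodMk_right hA
  have hdisintegrate : ∀ {A : Set (E × T)}, MeasurableSet A →
      P {ω | (X ω, Y ω) ∈ A} = ∫⁻ ω, μ {x | (x, Y ω) ∈ A} ∂P := by
    intro A hA
    calc P {ω | (X ω, Y ω) ∈ A} = (P.map fun ω => (X ω, Y ω)) A :=
          (Measure.map_apply_of_aemeasurable (hX.aemeasurable.prodMk hY) hA).symm
      _ = (μ.prod (P.map Y)) A := by
          rw [hXY.map_prod_eq_prod_map_map hX.aemeasurable hY, hX.map_eq]
      _ = ∫⁻ t, μ {x | (x, t) ∈ A} ∂(P.map Y) := Measure.prod_apply_symm hA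
      _ = ∫⁻ ω, μ {x | (x, Y ω) ∈ A} ∂P := lintegral_map' (hslice hA).aemeasurable hY
  calc P {ω | (X ω, Y ω) ∈ S} = ∫⁻ ω, μ {x | (x, Y ω) ∈ S} ∂P := hdisintegrate hS
    _ ≤ ∫⁻ ω, r * μ {x | (x, Y ω) ∈ S'} ∂P := lintegral_mono_ae h
    _ = r * ∫⁻ ω, μ {x | (x, Y ω) ∈ S'} ∂P :=
        lintegral_const_mul'' r ((hslice hS').comp_aemeasurable hY)
    _ = r * P {ω | (X ω, Y ω) ∈ S'} := by rw [hdisintegrate hS']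

theorem monotone_toReal_measure_setOf_le {Ω α : Type*} [MeasurableSpace Ω] [Preorder α]
    (P : Measure Ω) [IsFiniteMeasure P] (X : Ω → α) :
    Monotone fun x => (P {ω | X ω ≤ x}).toReal := fun _ _ hxy =>
  ENNReal.toReal_mono (measure_ne_top P _) (measure_mono fun _ (hω : _ ≤ _) => hω.trans hxy)

section Laplace

variable {b : ℝ}

instance sigmaFinite_laplaceMeasure : SigmaFinite (laplaceMeasure b) :=
  SigmaFinite.withDensity_ofReal (laplacePDF b)

theorem laplacePDF_le_exp_mul_laplacePDF (hb : 0 ≤ b) (x y : ℝ) :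
    laplacePDF b x ≤ exp (b * |x - y|) * laplacePDF b y := by
  have hexp : -b * |x| ≤ b * |x - y| + -b * |y| := by
    nlinarith [abs_sub_abs_le_abs_sub y x, abs_sub_comm x y]
  calc laplacePDF b x ≤ b / 2 * exp (b * |x - y| + -b * |y|) := by
        unfold laplacePDF
        gcongr
    _ = exp (b * |x - y|) * laplacePDF b y := by
        rw [exp_add, laplacePDF]
        ring

theorem map_add_left_laplaceMeasure_le (hb : 0 ≤ b) (c c' : ℝ) :
    (laplaceMeasure b).map (c + ·) ≤
      (exp (b * |c - c'|)).toNNReal • (laplaceMeasure b).map (c' + ·) := by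
  rw [laplaceMeasure, map_add_left_withDensity, map_add_left_withDensity,
    ← Measure.coe_nnreal_smul, ← withDensity_smul' _ _ ENNReal.coe_ne_top]
  refine withDensity_mono (.of_forall fun x => ?_)
  rw [Pi.smul_apply, smul_eq_mul, ← ENNReal.ofReal, ← ENNReal.ofReal_mul (exp_nonneg _)]
  refine ENNReal.ofReal_le_ofReal ?_
  have h := laplacePDF_le_exp_mul_laplacePDF hb (-c + x) (-c' + x)
  rwa [add_sub_add_right_eq_sub, neg_sub_neg, abs_sub_comm] at h

variable {ι : Type*} [Fintype ι]

theorem map_add_left_pi_laplaceMeasure_le (hb : 0 ≤ b) (c c' : ι → ℝ) :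
    (Measure.pi fun _ => laplaceMeasure b).map (c + ·) ≤
      (exp (b * ∑ i, |c i - c' i|)).toNNReal •
        (Measure.pi fun _ => laplaceMeasure b).map (c' + ·) := by
  have hσ (a : ℝ) : SigmaFinite ((laplaceMeasure b).map (a + ·)) :=
    (measurableEmbedding_addLeft a).sigmaFinite_map
  have hmap (a : ι → ℝ) : (Measure.pi fun _ => laplaceMeasure b).map (a + ·) =
      Measure.pi fun i => (laplaceMeasure b).map (a i + ·) :=
    Measure.pi_map_pi fun i => (measurable_const_add (a i)).aemeasurable
  rw [hmap, hmap, Finset.mul_sum, exp_sum, Real.toNNReal_prod_of_nonneg fun _ _ => exp_nonneg _,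
    ← measure_pi_smul]
  exact measure_pi_mono fun i => map_add_left_laplaceMeasure_le hb (c i) (c' i)

/-- `S` encodes the post-processing: it is the preimage of the output event, so that both the query
and the post-processing may depend on the independent randomness `Y`. -/
theorem laplace_mechanism_le {Ω T : Type*} [MeasurableSpace Ω] {P : Measure Ω}
    [IsFiniteMeasure P] [MeasurableSpace T] (hb : 0 ≤ b) {X : Ω → ι → ℝ} {Y : Ω → T}
    (hX : HasLaw X (Measure.pi fun _ => laplaceMeasure b) P) (hY : AEMeasurable Y P)
    (hXY : IndepFun X Y P) {q q' : T → ι → ℝ} (hq : Measurable q) (hq' : Measurable q') {Δ : ℝ}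
    (hΔ : ∀ᵐ ω ∂P, ∑ i, |q (Y ω) i - q' (Y ω) i| ≤ Δ) {S : Set (T × (ι → ℝ))}
    (hS : MeasurableSet S) :
    P {ω | (Y ω, q (Y ω) + X ω) ∈ S} ≤
      ENNReal.ofReal (exp (b * Δ)) * P {ω | (Y ω, q' (Y ω) + X ω) ∈ S} := by
  have hshift {p : T → ι → ℝ} (hp : Measurable p) :
      Measurable fun x : (ι → ℝ) × T => (x.2, p x.2 + x.1) := by fun_prop
  refine measure_prodMk_mem_le_of_indepFun hX hY hXY (hshift hq hS) (hshift hq' hS) _ ?_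
  filter_upwards [hΔ] with ω hω
  have hslice : MeasurableSet (Prod.mk (Y ω) ⁻¹' S) := measurable_prodMk_left hS
  have h := map_add_left_pi_laplaceMeasure_le hb (q (Y ω)) (q' (Y ω)) (Prod.mk (Y ω) ⁻¹' S)
  rw [Measure.smul_apply, Measure.map_apply (measurable_const_add _) hslice,
    Measure.map_apply (measurable_const_add _) hslice, ENNReal.smul_def, smul_eq_mul] at h
  refine h.trans ?_
  gcongr ?_ * _
  exact ENNReal.ofReal_le_ofReal (by gcongr)

end Laplace

theorem sum_abs_sub_le_hammingDist {ι α : Type*} [Fintype ι] [DecidableEq α] {g : α → ℝ}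
    (hg : ∀ y, g y ∈ Icc 0 1) (z z' : ι → α) :
    ∑ i, |g (z i) - g (z' i)| ≤ hammingDist z z' := by
  rw [hammingDist, Finset.card_filter, Nat.cast_sum]
  refine Finset.sum_le_sum fun i _ => ?_
  split_ifs with h
  · simpa using abs_sub_le_of_le_of_le (hg (z i)).1 (hg (z i)).2 (hg (z' i)).1 (hg (z' i)).2
  · simp [not_not.1 h]

theorem hammingDist_le_one_of_forall_ne {ι α : Type*} [Fintype ι] [DecidableEq α] {z z' : ι → α}
    {i₀ : ι} (h : ∀ j, j ≠ i₀ → z j = z' j) : hammingDist z z' ≤ 1 := by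
  refine (Finset.card_le_card (t := {i₀}) fun j hj => ?_).trans_eq (Finset.card_singleton i₀)
  by_contra hne
  simp_all

section GeneralizedPareto

variable {γ β : ℝ}

theorem gpdCDF_mem_Icc (hγ : 0 < γ) (hβ : 0 < β) (y : ℝ) : gpdCDF γ β y ∈ Icc 0 1 := by
  unfold gpdCDF
  split_ifs with hy
  · simp
  have hbase : 1 ≤ 1 + γ * y / β := le_add_of_nonneg_right (by have := not_lt.1 hy; positivity)
  have hle : (1 + γ * y / β) ^ (-(1 / γ)) ≤ 1 :=
    rpow_le_one_of_one_le_of_nonpos hbase (neg_nonpos.2 (by positivity))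
  have hnonneg : 0 ≤ (1 + γ * y / β) ^ (-(1 / γ)) := by positivity
  exact ⟨sub_nonneg.2 hle, sub_le_self 1 hnonneg⟩

theorem measurable_gpdCDF (y : ℝ) : Measurable fun θ : ℝ × ℝ => gpdCDF θ.1 θ.2 y := by
  unfold gpdCDF
  split_ifs <;> fun_prop

theorem measurable_Hfun {R : ℝ → ℝ} (hR : Measurable R) :
    Measurable fun p : (ℝ × ℝ) × ℝ => Hfun p.1 R p.2 := by
  unfold Hfun gpdCDFInv
  fun_prop

end GeneralizedPareto

theorem gpd_perturbation_mechanism_estimated_parameter_differentially_private_general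
    {Ω ι : Type*} [MeasurableSpace Ω] (P : Measure Ω) [IsProbabilityMeasure P] [Fintype ι]
    {b : ℝ} (hb : 0 < b) {e : ι → Ω → ℝ} (he : ∀ j, HasLaw (e j) (laplaceMeasure b) P)
    (hind : iIndepFun e P) {Θhat : Ω → ℝ × ℝ} (hΘm : AEMeasurable Θhat P)
    (hΘpos : ∀ᵐ ω ∂P, 0 < (Θhat ω).1 ∧ 0 < (Θhat ω).2)
    (hΘe : IndepFun (fun ω j => e j ω) Θhat P) {R : ℝ → ℝ} (hR : Measurable R)
    {z z' : ι → ℝ} {n : ℕ} (hzz' : hammingDist z z' ≤ n) {B : Set (ι → ℝ)}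
    (hB : MeasurableSet B) :
    P {ω | (fun j => Hfun (Θhat ω) R (gpdCDF (Θhat ω).1 (Θhat ω).2 (z j) + e j ω)) ∈ B} ≤
      ENNReal.ofReal (exp (b * n)) *
        P {ω | (fun j => Hfun (Θhat ω) R (gpdCDF (Θhat ω).1 (Θhat ω).2 (z' j) + e j ω)) ∈ B} := by
  have hquery (w : ι → ℝ) : Measurable fun (θ : ℝ × ℝ) j => gpdCDF θ.1 θ.2 (w j) :=
    measurable_pi_lambda _ fun j => measurable_gpdCDF (w j)
  have hpost : Measurable fun (p : (ℝ × ℝ) × (ι → ℝ)) j => Hfun p.1 R (p.2 j) :=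
    measurable_pi_lambda _ fun j => (measurable_Hfun hR).comp
      (f := fun p : (ℝ × ℝ) × (ι → ℝ) => (p.1, p.2 j)) (by fun_prop)
  have hsens : ∀ᵐ ω ∂P, ∑ j, |gpdCDF (Θhat ω).1 (Θhat ω).2 (z j) -
      gpdCDF (Θhat ω).1 (Θhat ω).2 (z' j)| ≤ n := by
    filter_upwards [hΘpos] with ω hω
    exact (sum_abs_sub_le_hammingDist (gpdCDF_mem_Icc hω.1 hω.2) z z').trans
      (Nat.cast_le.2 hzz')
  exact laplace_mechanism_le hb.le (hasLaw_pi_of_iIndepFun he hind) hΘm hΘe (hquery z) (hquery z')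
    hsens (hpost hB)

/-- Theorem 4: the perturbation mechanism with a random estimated parameter
`Θ̂ = (γ̂, β̂)` taking values in `(0,∞)²`, independent of the Laplace noise, mapping
`z ↦ (H_Θ̂(G_Θ̂(z_1) + e_1), …, H_Θ̂(G_Θ̂(z_k) + e_k))`, is `b`-differentially private. -/
theorem gpd_perturbation_mechanism_estimated_parameter_differentially_private
    {Ω : Type*} [MeasurableSpace Ω] (P : Measure Ω) [IsProbabilityMeasure P]
    {Ω' : Type*} [MeasurableSpace Ω'] (P' : Measure Ω') [IsProbabilityMeasure P']
    (b : ℝ) (hb : 0 < b) (k : ℕ) (hk : 1 ≤ k)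
    (e : Fin k → Ω → ℝ) (hem : ∀ j, Measurable (e j))
    (hind : iIndepFun e P)
    (hlaw : ∀ j, Measure.map (e j) P = laplaceMeasure b)
    (Θhat : Ω → ℝ × ℝ) (hΘm : Measurable Θhat)
    (hΘpos : ∀ ω, 0 < (Θhat ω).1 ∧ 0 < (Θhat ω).2)
    (hΘe : IndepFun (fun ω => (fun j => e j ω)) Θhat P)
    (U e' : Ω' → ℝ) (hUm : Measurable U) (he'm : Measurable e')
    (hU : Measure.map U P' = unifMeasure)
    (he' : Measure.map e' P' = laplaceMeasure b)
    (hUe' : IndepFun U e' P')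
    (R : ℝ → ℝ) (hR : ∀ x, R x = (P' {ω | U ω + e' ω ≤ x}).toReal)
    (z z' : Fin k → ℝ) (hz : ∀ j, 0 < z j) (hz' : ∀ j, 0 < z' j)
    (hdiff : ∃ i₀ : Fin k, (∀ j, j ≠ i₀ → z j = z' j))
    (B : Set (Fin k → ℝ)) (hB : MeasurableSet B) :
    P {ω | (fun j => Hfun (Θhat ω) R (gpdCDF (Θhat ω).1 (Θhat ω).2 (z j) + e j ω)) ∈ B} ≤
      ENNReal.ofReal (Real.exp b) *
        P {ω | (fun j => Hfun (Θhat ω) R (gpdCDF (Θhat ω).1 (Θhat ω).2 (z' j) + e j ω)) ∈ B} := by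
  obtain ⟨i₀, hi₀⟩ := hdiff
  have hRm : Measurable R := by
    rw [funext hR]
    exact (monotone_toReal_measure_setOf_le P' fun ω => U ω + e' ω).measurable
  simpa only [Nat.cast_one, mul_one] using
    gpd_perturbation_mechanism_estimated_parameter_differentially_private_general P hb
      (fun j => ⟨(hem j).aemeasurable, hlaw j⟩) hind hΘm.aemeasurable (.of_forall hΘpos) hΘe hRm
      (hammingDist_le_one_of_forall_ne hi₀) hB

end
end

section
/- Let (W(s))_{s∈[0,1]} be a jointly measurable, centered stochastic process with E[W(s)W(t)] = min(s,t) for all s,t ∈ [0,1] (in particular E[W(s)²] = s). Then almost surely the integral ∫₀¹ |W(s)|/s ds is finite, and the random variable X = ∫₀¹ ( W(s)/s − W(1) ) ds satisfies E[X] = 0 and E[X²] = 1. -/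
open MeasureTheory ProbabilityTheory Real Set Filter

noncomputable section

/-!
Since `‖W(s)/s‖₂ = s ^ (-1/2)` is integrable on `(0, 1]`, so is the `L²(P)` norm of
`Z(s) = W(s)/s - W(1)`. Fubini's theorem, justified by Hölder's inequality, then gives
`E[∫ Z] = ∫ E[Z(s)] ds = 0` and `E[(∫ Z)²] = ∬ E[Z(s) Z(t)] dt ds`. The covariance of `Z` is
`1 / max s t - 1`, whose integral in `t` is `-log s`, and `∫₀¹ -log s ds = 1`.
-/

section MixedNorm

variable {S T Ω E 𝕜 : Type*} [MeasurableSpace S] [MeasurableSpace T] [MeasurableSpace Ω]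
  [NormedAddCommGroup E] [RCLike 𝕜] {μ : Measure S} {ν : Measure T} {P : Measure Ω} {p q : ENNReal}

lemma measurable_eLpNorm_of_stronglyMeasurable_uncurry [SFinite P] {X : S → Ω → E}
    (hX : StronglyMeasurable (Function.uncurry X)) (hp : p ≠ ⊤) :
    Measurable fun s => eLpNorm (X s) p P := by
  rcases eq_or_ne p 0 with rfl | hp0
  · simp only [eLpNorm_exponent_zero, measurable_const]
  · simp only [eLpNorm_eq_lintegral_rpow_enorm_toReal hp0 hp]
    exact (Measurable.lintegral_prod_right (hX.enorm.pow_const p.toReal)).pow_const _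

lemma integrable_uncurry_of_lintegral_eLpNorm_ne_top [IsFiniteMeasure P] {X : S → Ω → E}
    (hX : StronglyMeasurable (Function.uncurry X)) (hp : 1 ≤ p)
    (hXp : ∫⁻ s, eLpNorm (X s) p P ∂μ ≠ ⊤) :
    Integrable (Function.uncurry X) (μ.prod P) := by
  set c : ENNReal := P univ ^ (1 / (1 : ENNReal).toReal - 1 / p.toReal)
  have hc : c ≠ ⊤ := by
    refine ENNReal.rpow_ne_top_of_nonneg ?_ (measure_ne_top P univ)
    rcases eq_or_ne p ⊤ with rfl | hp'
    · simp
    · have : 1 ≤ p.toReal := by simpa using ENNReal.toReal_mono hp' hp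
      simpa using inv_le_one_of_one_le₀ this
  have hsection (s : S) : ∫⁻ ω, ‖X s ω‖ₑ ∂P ≤ eLpNorm (X s) p P * c := by
    rw [← eLpNorm_one_eq_lintegral_enorm]
    exact eLpNorm_le_eLpNorm_mul_rpow_measure_univ hp
      (hX.comp_measurable measurable_prodMk_left).aestronglyMeasurable
  refine ⟨hX.aestronglyMeasurable, ?_⟩
  calc ∫⁻ z, ‖Function.uncurry X z‖ₑ ∂μ.prod P
      = ∫⁻ s, ∫⁻ ω, ‖X s ω‖ₑ ∂P ∂μ := lintegral_prod _ hX.enorm.aemeasurable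
    _ ≤ ∫⁻ s, eLpNorm (X s) p P * c ∂μ := lintegral_mono hsection
    _ = (∫⁻ s, eLpNorm (X s) p P ∂μ) * c := lintegral_mul_const' _ _ hc
    _ < ⊤ := ENNReal.mul_lt_top hXp.lt_top hc.lt_top

lemma lintegral_enorm_mul_le_eLpNorm_mul_eLpNorm [p.HolderConjugate q] {f g : Ω → 𝕜}
    (hf : AEStronglyMeasurable f P) (hg : AEStronglyMeasurable g P) :
    ∫⁻ ω, ‖f ω * g ω‖ₑ ∂P ≤ eLpNorm f p P * eLpNorm g q P := by
  rw [← eLpNorm_one_eq_lintegral_enorm]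
  exact eLpNorm_smul_le_mul_eLpNorm (φ := f) (p := p) (q := q) (r := 1) hg hf

variable {X : S → Ω → 𝕜} {Y : T → Ω → 𝕜}

lemma integrable_mul_of_lintegral_eLpNorm_ne_top [SFinite ν] [SFinite P] [p.HolderConjugate q]
    (hp : p ≠ ⊤) (hq : q ≠ ⊤) (hX : StronglyMeasurable (Function.uncurry X))
    (hY : StronglyMeasurable (Function.uncurry Y)) (hXp : ∫⁻ s, eLpNorm (X s) p P ∂μ ≠ ⊤)
    (hYq : ∫⁻ t, eLpNorm (Y t) q P ∂ν ≠ ⊤) :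
    Integrable (fun z : (S × T) × Ω => X z.1.1 z.2 * Y z.1.2 z.2) ((μ.prod ν).prod P) := by
  have hXY : StronglyMeasurable fun z : (S × T) × Ω => X z.1.1 z.2 * Y z.1.2 z.2 :=
    (hX.comp_measurable (g := fun z : (S × T) × Ω => (z.1.1, z.2)) (by fun_prop)).mul
      (hY.comp_measurable (g := fun z : (S × T) × Ω => (z.1.2, z.2)) (by fun_prop))
  refine ⟨hXY.aestronglyMeasurable, ?_⟩
  calc ∫⁻ z, ‖X z.1.1 z.2 * Y z.1.2 z.2‖ₑ ∂(μ.prod ν).prod P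
      = ∫⁻ r, ∫⁻ ω, ‖X r.1 ω * Y r.2 ω‖ₑ ∂P ∂μ.prod ν := lintegral_prod _ hXY.enorm.aemeasurable
    _ ≤ ∫⁻ r, eLpNorm (X r.1) p P * eLpNorm (Y r.2) q P ∂μ.prod ν :=
        lintegral_mono fun r => lintegral_enorm_mul_le_eLpNorm_mul_eLpNorm
          (hX.comp_measurable measurable_prodMk_left).aestronglyMeasurable
          (hY.comp_measurable measurable_prodMk_left).aestronglyMeasurable
    _ = (∫⁻ s, eLpNorm (X s) p P ∂μ) * ∫⁻ t, eLpNorm (Y t) q P ∂ν :=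
        lintegral_prod_mul
          (measurable_eLpNorm_of_stronglyMeasurable_uncurry hX hp).aemeasurable
          (measurable_eLpNorm_of_stronglyMeasurable_uncurry hY hq).aemeasurable
    _ < ⊤ := ENNReal.mul_lt_top hXp.lt_top hYq.lt_top

theorem integral_mul_integral_eq_integral_integral_integral_mul [SFinite μ] [SFinite ν] [SFinite P]
    [p.HolderConjugate q] (hp : p ≠ ⊤) (hq : q ≠ ⊤) (hX : StronglyMeasurable (Function.uncurry X))
    (hY : StronglyMeasurable (Function.uncurry Y)) (hXp : ∫⁻ s, eLpNorm (X s) p P ∂μ ≠ ⊤)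
    (hYq : ∫⁻ t, eLpNorm (Y t) q P ∂ν ≠ ⊤) :
    ∫ ω, (∫ s, X s ω ∂μ) * (∫ t, Y t ω ∂ν) ∂P = ∫ s, ∫ t, ∫ ω, X s ω * Y t ω ∂P ∂ν ∂μ := by
  have hXY := integrable_mul_of_lintegral_eLpNorm_ne_top hp hq hX hY hXp hYq
  calc ∫ ω, (∫ s, X s ω ∂μ) * (∫ t, Y t ω ∂ν) ∂P
      = ∫ ω, ∫ r : S × T, X r.1 ω * Y r.2 ω ∂μ.prod ν ∂P := by
        congr with ω
        exact (integral_prod_mul (X · ω) (Y · ω)).symm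
    _ = ∫ r : S × T, ∫ ω, X r.1 ω * Y r.2 ω ∂P ∂μ.prod ν := (integral_integral_swap hXY).symm
    _ = ∫ s, ∫ t, ∫ ω, X s ω * Y t ω ∂P ∂ν ∂μ := integral_prod _ hXY.integral_prod_left

end MixedNorm

section MaxKernel

lemma continuous_inv_max {a : ℝ} (ha : 0 < a) : Continuous fun t : ℝ => (max a t)⁻¹ :=
  (continuous_const.max continuous_id).inv₀ fun t => (ha.trans_le (le_max_left a t)).ne'

lemma integral_inv_max {a b : ℝ} (ha : 0 < a) (hab : a ≤ b) :
    ∫ t in (0 : ℝ)..b, (max a t)⁻¹ = 1 + log (b / a) := by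
  have hleft : ∫ t in (0 : ℝ)..a, (max a t)⁻¹ = 1 := by
    rw [intervalIntegral.integral_congr (g := fun _ => a⁻¹) fun t ht => ?_]
    · simp [ha.ne']
    · rw [uIcc_of_le ha.le] at ht
      simp only [max_eq_left ht.2]
  have hright : ∫ t in a..b, (max a t)⁻¹ = log (b / a) := by
    rw [← integral_inv_of_pos ha (ha.trans_le hab)]
    refine intervalIntegral.integral_congr fun t ht => ?_
    rw [uIcc_of_le hab] at ht
    simp only [max_eq_right ht.1]
  rw [← intervalIntegral.integral_add_adjacent_intervals
    ((continuous_inv_max ha).intervalIntegrable 0 a)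
    ((continuous_inv_max ha).intervalIntegrable a b), hleft, hright]

lemma setIntegral_inv_max_sub_one {s : ℝ} (hs : s ∈ Ioc (0 : ℝ) 1) :
    ∫ t in Ioc (0 : ℝ) 1, ((max s t)⁻¹ - 1) = -log s := by
  rw [← intervalIntegral.integral_of_le zero_le_one,
    intervalIntegral.integral_sub ((continuous_inv_max hs.1).intervalIntegrable 0 1)
      intervalIntegrable_const, integral_inv_max hs.1 hs.2]
  simp

lemma setIntegral_setIntegral_inv_max_sub_one :
    ∫ s in Ioc (0 : ℝ) 1, ∫ t in Ioc (0 : ℝ) 1, ((max s t)⁻¹ - 1) = 1 := by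
  rw [setIntegral_congr_fun measurableSet_Ioc fun s hs => setIntegral_inv_max_sub_one hs,
    ← intervalIntegral.integral_of_le zero_le_one]
  simp

end MaxKernel

section Hill

variable {Ω : Type*} [MeasurableSpace Ω] {P : Measure Ω} {W : ℝ → Ω → ℝ}

lemma eLpNorm_two_eq_ofReal_sqrt_integral_mul_self {f : Ω → ℝ} (hf : MemLp f 2 P) :
    eLpNorm f 2 P = ENNReal.ofReal √(∫ ω, f ω * f ω ∂P) := by
  rw [hf.eLpNorm_eq_integral_rpow_norm two_ne_zero ENNReal.ofNat_ne_top, sqrt_eq_rpow]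
  simp [sq]

lemma lintegral_eLpNorm_div_ne_top {p : ENNReal} {b : ℝ}
    (hW : ∀ s ∈ Ioc 0 b, eLpNorm (W s) p P ≤ ENNReal.ofReal √s) :
    ∫⁻ s in Ioc 0 b, eLpNorm (fun ω => W s ω / s) p P ≠ ⊤ := by
  have hint : IntegrableOn (fun s : ℝ => s ^ (-(1 / 2) : ℝ)) (Ioc 0 b) :=
    (intervalIntegral.intervalIntegrable_rpow' (by norm_num)).1
  refine ((setLIntegral_mono' measurableSet_Ioc fun s hs => ?_).trans_lt hint.lintegral_lt_top).ne
  calc eLpNorm (fun ω => W s ω / s) p P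
      = ENNReal.ofReal s⁻¹ * eLpNorm (W s) p P := by
        rw [← enorm_of_nonneg (inv_nonneg.2 hs.1.le), ← eLpNorm_const_smul]
        simp only [div_eq_inv_mul]
        rfl
    _ ≤ ENNReal.ofReal s⁻¹ * ENNReal.ofReal √s := by gcongr; exact hW s hs
    _ = ENNReal.ofReal (s ^ (-(1 / 2) : ℝ)) := by
        rw [← ENNReal.ofReal_mul (inv_nonneg.2 hs.1.le), ← rpow_neg_one, sqrt_eq_rpow,
          ← rpow_add hs.1]
        norm_num

/-- The integrand `s⁻¹ W(s) - W(1)` of the limiting variable of the Hill estimator, as a process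
in `s`. At `s = 0` it takes the junk value `-W(1)`, which the integral over `(0, 1]` ignores. -/
def hillIntegrand (W : ℝ → Ω → ℝ) (s : ℝ) (ω : Ω) : ℝ := W s ω / s - W 1 ω

lemma stronglyMeasurable_uncurry_div (hW : Measurable (Function.uncurry W)) :
    StronglyMeasurable (Function.uncurry fun s ω => W s ω / s) :=
  (hW.div measurable_fst).stronglyMeasurable

lemma stronglyMeasurable_uncurry_hillIntegrand (hW : Measurable (Function.uncurry W)) :
    StronglyMeasurable (Function.uncurry (hillIntegrand W)) :=
  (stronglyMeasurable_uncurry_div hW).sub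
    ((hW.comp measurable_prodMk_left).comp measurable_snd).stronglyMeasurable

lemma lintegral_eLpNorm_hillIntegrand_ne_top {p : ENNReal} (hp : 1 ≤ p)
    (hmeas : Measurable (Function.uncurry W))
    (hW : ∀ s ∈ Ioc (0 : ℝ) 1, eLpNorm (W s) p P ≤ ENNReal.ofReal √s) :
    ∫⁻ s in Ioc (0 : ℝ) 1, eLpNorm (hillIntegrand W s) p P ≠ ⊤ := by
  have hW1 : eLpNorm (W 1) p P ≠ ⊤ :=
    ((hW 1 ⟨one_pos, le_rfl⟩).trans_lt ENNReal.ofReal_lt_top).ne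
  have hsection (s : ℝ) : Measurable (W s) := hmeas.comp measurable_prodMk_left
  refine ne_top_of_le_ne_top ?_ (lintegral_mono fun s =>
    eLpNorm_sub_le ((hsection s).div_const s).aestronglyMeasurable
      (hsection 1).aestronglyMeasurable hp)
  rw [lintegral_add_right _ measurable_const]
  simpa using ⟨lintegral_eLpNorm_div_ne_top hW, hW1⟩

lemma integral_hillIntegrand_eq_zero {s : ℝ} (hWs : Integrable (W s) P) (hW1 : Integrable (W 1) P)
    (hs : ∫ ω, W s ω ∂P = 0) (h1 : ∫ ω, W 1 ω ∂P = 0) : ∫ ω, hillIntegrand W s ω ∂P = 0 := by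
  simp only [hillIntegrand]
  rw [integral_sub (hWs.div_const s) hW1, integral_div, hs, h1, zero_div, sub_zero]

lemma integral_hillIntegrand_mul_hillIntegrand
    (hL2 : ∀ s ∈ Ioc (0 : ℝ) 1, MemLp (W s) 2 P)
    (hcov : ∀ s ∈ Ioc (0 : ℝ) 1, ∀ t ∈ Ioc (0 : ℝ) 1, ∫ ω, W s ω * W t ω ∂P = min s t)
    {s t : ℝ} (hs : s ∈ Ioc (0 : ℝ) 1) (ht : t ∈ Ioc (0 : ℝ) 1) :
    ∫ ω, hillIntegrand W s ω * hillIntegrand W t ω ∂P = (max s t)⁻¹ - 1 := by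
  have h1 : (1 : ℝ) ∈ Ioc (0 : ℝ) 1 := ⟨one_pos, le_rfl⟩
  have hint {u v : ℝ} (hu : u ∈ Ioc (0 : ℝ) 1) (hv : v ∈ Ioc (0 : ℝ) 1) (c : ℝ) :
      Integrable (fun ω => W u ω * W v ω / c) P :=
    ((hL2 u hu).integrable_mul (hL2 v hv)).div_const c
  have hintSub {u v : ℝ} (hu : u ∈ Ioc (0 : ℝ) 1) (hv : v ∈ Ioc (0 : ℝ) 1) (c d : ℝ) :
      Integrable (fun ω => W u ω * W v ω / c - W u ω * W 1 ω / d) P :=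
    (hint hu hv c).sub (hint hu h1 d)
  have hexpand (ω : Ω) : hillIntegrand W s ω * hillIntegrand W t ω =
      (W s ω * W t ω / (s * t) - W s ω * W 1 ω / s) -
        (W 1 ω * W t ω / t - W 1 ω * W 1 ω / 1) := by
    simp only [hillIntegrand]
    ring
  have hmin : min s t / (s * t) = (max s t)⁻¹ := by
    rw [← min_mul_max s t, div_mul_cancel_left₀ (lt_min hs.1 ht.1).ne']
  calc ∫ ω, hillIntegrand W s ω * hillIntegrand W t ω ∂P
      = (min s t / (s * t) - min s 1 / s) - (min 1 t / t - min 1 1 / 1) := by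
        simp only [hexpand]
        rw [integral_sub (hintSub hs ht _ _) (hintSub h1 ht _ _),
          integral_sub (hint hs ht _) (hint hs h1 _), integral_sub (hint h1 ht _) (hint h1 h1 _)]
        simp only [integral_div, hcov s hs t ht, hcov s hs 1 h1, hcov 1 h1 t ht, hcov 1 h1 1 h1]
    _ = (max s t)⁻¹ - 1 := by
        rw [hmin, min_eq_left hs.2, min_eq_right ht.2, min_self, div_self hs.1.ne',
          div_self ht.1.ne', div_one, sub_self, sub_zero]

theorem ae_integrableOn_abs_div [IsFiniteMeasure P] {p : ENNReal} {b : ℝ} (hp : 1 ≤ p)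
    (hmeas : Measurable (Function.uncurry W))
    (hW : ∀ s ∈ Ioc 0 b, eLpNorm (W s) p P ≤ ENNReal.ofReal √s) :
    ∀ᵐ ω ∂P, IntegrableOn (fun s => |W s ω| / s) (Ioc 0 b) := by
  have hint := integrable_uncurry_of_lintegral_eLpNorm_ne_top
    (stronglyMeasurable_uncurry_div hmeas) hp (lintegral_eLpNorm_div_ne_top hW)
  filter_upwards [hint.prod_left_ae] with ω hω
  refine IntegrableOn.congr_fun hω.abs (fun s hs => ?_) measurableSet_Ioc
  simp only [Function.uncurry_apply_pair, abs_div, abs_of_pos hs.1]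

theorem integral_setIntegral_hillIntegrand_eq_zero [IsFiniteMeasure P] {p : ENNReal} (hp : 1 ≤ p)
    (hmeas : Measurable (Function.uncurry W))
    (hW : ∀ s ∈ Ioc (0 : ℝ) 1, eLpNorm (W s) p P ≤ ENNReal.ofReal √s)
    (hmean : ∀ s ∈ Ioc (0 : ℝ) 1, ∫ ω, W s ω ∂P = 0) :
    ∫ ω, (∫ s in Ioc (0 : ℝ) 1, hillIntegrand W s ω) ∂P = 0 := by
  have h1 : (1 : ℝ) ∈ Ioc (0 : ℝ) 1 := ⟨one_pos, le_rfl⟩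
  have hWint (s : ℝ) (hs : s ∈ Ioc (0 : ℝ) 1) : Integrable (W s) P :=
    MemLp.integrable hp ⟨(hmeas.comp measurable_prodMk_left).aestronglyMeasurable,
      (hW s hs).trans_lt ENNReal.ofReal_lt_top⟩
  rw [← integral_integral_swap (integrable_uncurry_of_lintegral_eLpNorm_ne_top
    (stronglyMeasurable_uncurry_hillIntegrand hmeas) hp
    (lintegral_eLpNorm_hillIntegrand_ne_top hp hmeas hW))]
  exact setIntegral_eq_zero_of_forall_eq_zero fun s hs =>
    integral_hillIntegrand_eq_zero (hWint s hs) (hWint 1 h1) (hmean s hs) (hmean 1 h1)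

theorem integral_sq_setIntegral_hillIntegrand_eq_one [SFinite P]
    (hmeas : Measurable (Function.uncurry W))
    (hL2 : ∀ s ∈ Ioc (0 : ℝ) 1, MemLp (W s) 2 P)
    (hcov : ∀ s ∈ Ioc (0 : ℝ) 1, ∀ t ∈ Ioc (0 : ℝ) 1, ∫ ω, W s ω * W t ω ∂P = min s t) :
    ∫ ω, (∫ s in Ioc (0 : ℝ) 1, hillIntegrand W s ω) ^ 2 ∂P = 1 := by
  have hZ := stronglyMeasurable_uncurry_hillIntegrand hmeas
  have hW (s : ℝ) (hs : s ∈ Ioc (0 : ℝ) 1) : eLpNorm (W s) 2 P ≤ ENNReal.ofReal √s := by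
    rw [eLpNorm_two_eq_ofReal_sqrt_integral_mul_self (hL2 s hs), hcov s hs s hs, min_self]
  have hZnorm := lintegral_eLpNorm_hillIntegrand_ne_top one_le_two hmeas hW
  simp only [sq]
  rw [integral_mul_integral_eq_integral_integral_integral_mul ENNReal.ofNat_ne_top
    ENNReal.ofNat_ne_top hZ hZ hZnorm hZnorm]
  refine Eq.trans ?_ setIntegral_setIntegral_inv_max_sub_one
  exact setIntegral_congr_fun measurableSet_Ioc fun s hs =>
    setIntegral_congr_fun measurableSet_Ioc fun t ht =>
      integral_hillIntegrand_mul_hillIntegrand hL2 hcov hs ht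

end Hill

/-- for a jointly measurable centered process `W` on `[0,1]` with the
Brownian-motion covariance `E[W(s)W(t)] = min(s,t)`, the integral `∫₀¹ |W(s)|/s ds` is
almost surely finite, and `X = ∫₀¹ (W(s)/s - W(1)) ds` satisfies `E[X] = 0` and
`E[X²] = 1`. -/
theorem brownian_hill_limit_mean_zero_variance_one
    {Ω : Type*} [MeasurableSpace Ω] (P : Measure Ω) [IsProbabilityMeasure P]
    (W : ℝ → Ω → ℝ)
    (hjm : Measurable (Function.uncurry W))
    (hL2 : ∀ s ∈ Set.Icc (0:ℝ) 1, MemLp (W s) 2 P)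
    (hmean : ∀ s ∈ Set.Icc (0:ℝ) 1, ∫ ω, W s ω ∂P = 0)
    (hcov : ∀ s ∈ Set.Icc (0:ℝ) 1, ∀ t ∈ Set.Icc (0:ℝ) 1,
      ∫ ω, W s ω * W t ω ∂P = min s t) :
    (∀ᵐ ω ∂P, IntegrableOn (fun s => |W s ω| / s) (Set.Ioc 0 1) volume) ∧
    (∫ ω, (∫ s in Set.Ioc (0:ℝ) 1, (W s ω / s - W 1 ω)) ∂P = 0) ∧
    (∫ ω, (∫ s in Set.Ioc (0:ℝ) 1, (W s ω / s - W 1 ω)) ^ 2 ∂P = 1) := by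
  have hL2' (s : ℝ) (hs : s ∈ Ioc (0 : ℝ) 1) : MemLp (W s) 2 P := hL2 s (Ioc_subset_Icc_self hs)
  have hmean' (s : ℝ) (hs : s ∈ Ioc (0 : ℝ) 1) : ∫ ω, W s ω ∂P = 0 :=
    hmean s (Ioc_subset_Icc_self hs)
  have hcov' (s : ℝ) (hs : s ∈ Ioc (0 : ℝ) 1) (t : ℝ) (ht : t ∈ Ioc (0 : ℝ) 1) :
      ∫ ω, W s ω * W t ω ∂P = min s t :=
    hcov s (Ioc_subset_Icc_self hs) t (Ioc_subset_Icc_self ht)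
  have hnorm (s : ℝ) (hs : s ∈ Ioc (0 : ℝ) 1) : eLpNorm (W s) 2 P ≤ ENNReal.ofReal √s := by
    rw [eLpNorm_two_eq_ofReal_sqrt_integral_mul_self (hL2' s hs), hcov' s hs s hs, min_self]
  exact ⟨ae_integrableOn_abs_div one_le_two hjm hnorm,
    integral_setIntegral_hillIntegrand_eq_zero one_le_two hjm hnorm hmean',
    integral_sq_setIntegral_hillIntegrand_eq_one hjm hL2' hcov'⟩

end
end
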